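/- Let D ≥ 1, δ > 0, K ≥ 0, and let L : ℝ^D → ℝ be K-Lipschitz with respect to the Euclidean norm. Then for every c ≥ K, sup_{λ ∈ ℝ^D} [ L(λ) − c · max(0, ‖λ‖₂ − δ) ] = sup_{λ : ‖λ‖₂ ≤ δ} L(λ); that is, the hinge-penalized unconstrained maximization with penalty coefficient at least the Lipschitz constant has the same optimal value as the ℓ₂-constrained maximization over the ball of radius δ. -/

import Mathlib

/-!
The hinge `max 0 (‖x‖ - δ)` is the distance from `x` to the ball of radius `δ`, so the theorem is an
instance of exact penalization: at any point, a `K`-Lipschitz function exceeds an upper bound of its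
values on a set `s` by at most `K` times the distance to `s`, and a penalty `c * infDist x s` with
`K ≤ c` absorbs this excess while vanishing on `s`. Hence the penalized function and the restriction
to `s` have the same upper bounds.
-/

section ExactPenalty

open Metric Set
open scoped NNReal

variable {X : Type*} [PseudoMetricSpace X] {f : X → ℝ} {s : Set X} {K : ℝ≥0} {b c : ℝ}

theorem sub_mul_infDist_le_of_mem_upperBounds (hf : LipschitzWith K f) (hs : s.Nonempty)
    (hb : b ∈ upperBounds (f '' s)) (x : X) : f x - K * infDist x s ≤ b := by
  have : Nonempty s := hs.to_subtype
  have excess_le : f x - b ≤ K * infDist x s := by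
    rw [infDist_eq_iInf, Real.mul_iInf_of_nonneg K.coe_nonneg]
    refine le_ciInf fun p => ?_
    calc
      f x - b ≤ f x - f p := sub_le_sub_left (hb (mem_image_of_mem f p.2)) _
      _ ≤ dist (f x) (f p) := Real.sub_le_dist _ _
      _ ≤ K * dist x p := hf.dist_le_mul x p
  exact sub_le_comm.mp excess_le

theorem upperBounds_range_sub_mul_infDist (hf : LipschitzWith K f) (hs : s.Nonempty)
    (hc : K ≤ c) :
    upperBounds (range fun x => f x - c * infDist x s) = upperBounds (f '' s) := by
  ext b
  constructor
  · rintro hb _ ⟨p, hp, rfl⟩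
    simpa only [infDist_zero_of_mem hp, mul_zero, sub_zero] using hb (mem_range_self p)
  · rintro hb _ ⟨x, rfl⟩
    calc
      f x - c * infDist x s ≤ f x - K * infDist x s :=
        sub_le_sub_left (mul_le_mul_of_nonneg_right hc infDist_nonneg) _
      _ ≤ b := sub_mul_infDist_le_of_mem_upperBounds hf hs hb x

theorem sSup_range_sub_mul_infDist (hf : LipschitzWith K f) (hs : s.Nonempty)
    (hbdd : BddAbove (f '' s)) (hc : K ≤ c) :
    sSup (range fun x => f x - c * infDist x s) = sSup (f '' s) := by
  have hlub : IsLUB (range fun x => f x - c * infDist x s) (sSup (f '' s)) :=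
    (isLUB_congr (upperBounds_range_sub_mul_infDist hf hs hc)).mpr
      (isLUB_csSup (hs.image f) hbdd)
  have : Nonempty X := hs.to_type
  exact hlub.csSup_eq (range_nonempty _)

variable {E : Type*} [SeminormedAddCommGroup E] [NormedSpace ℝ E] {δ : ℝ}

theorem infDist_closedBall (hδ : 0 ≤ δ) (x y : E) :
    infDist x (closedBall y δ) = max 0 (dist x y - δ) := by
  rw [infDist, ← cthickening_singleton y hδ, infEDist_cthickening, infEDist_singleton, edist_dist,
    ← ENNReal.ofReal_sub _ hδ, ENNReal.toReal_ofReal', max_comm]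

theorem hinge_penalty_equals_constrained_general {L : E → ℝ} (hδ : 0 ≤ δ)
    (hL : LipschitzWith K L) (hc : K ≤ c) :
    sSup (range fun l => L l - c * max 0 (‖l‖ - δ)) = sSup (L '' {l | ‖l‖ ≤ δ}) := by
  have ball_eq : {l : E | ‖l‖ ≤ δ} = closedBall 0 δ := by
    ext; exact mem_closedBall_zero_iff.symm
  have hinge_eq (l : E) : max 0 (‖l‖ - δ) = infDist l (closedBall 0 δ) := by
    rw [infDist_closedBall hδ, dist_zero_right]
  simp only [ball_eq, hinge_eq]
  exact sSup_range_sub_mul_infDist hL (nonempty_closedBall.mpr hδ)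
    (hL.isBounded_image isBounded_closedBall).bddAbove hc

end ExactPenalty

/-- Hinge-penalty equivalence for the AdvGAN-type objective: if `L` is `K`-Lipschitz for the
Euclidean norm and the penalty coefficient `c` satisfies `c ≥ K`, then the unconstrained
supremum of `L(λ) − c · max(0, ‖λ‖₂ − δ)` equals the supremum of `L` over the ℓ₂ ball of
radius `δ`. -/
theorem hinge_penalty_equals_constrained
    (D : ℕ) (hD : 1 ≤ D) (δ K c : ℝ) (hδ : 0 < δ) (hK : 0 ≤ K)
    (L : EuclideanSpace ℝ (Fin D) → ℝ)
    (hL : ∀ u v : EuclideanSpace ℝ (Fin D), |L u - L v| ≤ K * ‖u - v‖)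
    (hc : K ≤ c) :
    sSup (Set.range fun l : EuclideanSpace ℝ (Fin D) => L l - c * max 0 (‖l‖ - δ))
      = sSup (L '' {l : EuclideanSpace ℝ (Fin D) | ‖l‖ ≤ δ}) := by
  lift K to NNReal using hK
  exact hinge_penalty_equals_constrained_general hδ.le
    (LipschitzWith.of_dist_le_mul fun u v => by simpa [dist_eq_norm] using hL u v) hc
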